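/- arXiv:2103.16343 — 5 statements merged into one kernel-verified Lean document; each statement's English description precedes it below -/
import Mathlib

section
/- Let f be a C¹ real-valued function on [0,1] that is infinitely differentiable at x = 0 and satisfies f⁽ⁿ⁾(0) = 0 for all n ∈ ℕ ∪ {0}. If there is a constant C > 0 such that |x·f′(x)| ≤ C·|f(x)| for every x ∈ [0,1], then f(x) = 0 for every x ∈ [0,1]. -/
open Set Filter
open scoped Topology

/-!
In the variable `t = log x` the hypothesis reads `‖g'‖ ≤ C * ‖g‖` for `g t = f (exp t)`, so
Grönwall's inequality gives `‖f x‖ ≤ ‖f y‖ * (x / y) ^ C` for `0 < y ≤ x`. A flat function is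
`o(y ^ C)` by Taylor's theorem, so the right-hand side tends to `0` as `y → 0⁺`.
-/

section NormedSpace

variable {E : Type*} [NormedAddCommGroup E] [NormedSpace ℝ E]

theorem norm_le_mul_div_rpow_of_norm_smul_deriv_right_le {f f' : ℝ → E} {C a b : ℝ} (ha : 0 < a)
    (hf : ContinuousOn f (Icc a b)) (hf' : ∀ x ∈ Ico a b, HasDerivWithinAt f (f' x) (Ici x) x)
    (bound : ∀ x ∈ Ico a b, ‖x • f' x‖ ≤ C * ‖f x‖) :
    ∀ x ∈ Icc a b, ‖f x‖ ≤ ‖f a‖ * (x / a) ^ C := by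
  intro x hx
  have hx₀ : 0 < x := ha.trans_le hx.1
  have hb₀ : 0 < b := hx₀.trans_le hx.2
  have exp_mem_Icc : MapsTo Real.exp (Icc (Real.log a) (Real.log b)) (Icc a b) := fun t ht ↦
    ⟨(Real.log_le_iff_le_exp ha).1 ht.1, (Real.le_log_iff_exp_le hb₀).1 ht.2⟩
  have exp_mem_Ico : MapsTo Real.exp (Ico (Real.log a) (Real.log b)) (Ico a b) := fun t ht ↦
    ⟨(Real.log_le_iff_le_exp ha).1 ht.1, (Real.lt_log_iff_exp_lt hb₀).1 ht.2⟩
  have gronwall := norm_le_gronwallBound_of_norm_deriv_right_le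
    (f := f ∘ Real.exp) (f' := fun t ↦ Real.exp t • f' (Real.exp t)) (K := C) (ε := 0)
    (hf.comp Real.continuous_exp.continuousOn exp_mem_Icc)
    (fun t ht ↦ (hf' _ (exp_mem_Ico ht)).scomp t (Real.hasDerivAt_exp t).hasDerivWithinAt
      fun _ hs ↦ Real.exp_le_exp.2 hs)
    le_rfl (fun t ht ↦ by simpa using bound _ (exp_mem_Ico ht))
    (Real.log x) ⟨Real.log_le_log ha hx.1, Real.log_le_log hx₀ hx.2⟩
  rwa [gronwallBound_ε0, Function.comp_apply, Function.comp_apply, Real.exp_log hx₀,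
    Real.exp_log ha, ← Real.log_div hx₀.ne' ha.ne', mul_comm C,
    ← Real.rpow_def_of_pos (div_pos hx₀ ha)] at gronwall

theorem eq_zero_of_norm_smul_deriv_right_le_of_isLittleO_rpow {f f' : ℝ → E} {C b : ℝ}
    (hf : ContinuousOn f (Ioc 0 b)) (hf' : ∀ x ∈ Ioo 0 b, HasDerivWithinAt f (f' x) (Ici x) x)
    (bound : ∀ x ∈ Ioo 0 b, ‖x • f' x‖ ≤ C * ‖f x‖)
    (hflat : f =o[𝓝[>] 0] fun x : ℝ ↦ x ^ C) :
    ∀ x ∈ Ioc 0 b, f x = 0 := by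
  intro x hx
  have tendsto_bound : Tendsto (fun y ↦ ‖f y‖ / y ^ C * x ^ C) (𝓝[>] 0) (𝓝 0) := by
    simpa using hflat.norm_left.tendsto_div_nhds_zero.mul_const (x ^ C)
  refine norm_le_zero_iff.1 (ge_of_tendsto tendsto_bound ?_)
  filter_upwards [Ioo_mem_nhdsGT hx.1] with y hy
  have Ico_subset : Ico y b ⊆ Ioo 0 b := fun z hz ↦ ⟨hy.1.trans_le hz.1, hz.2⟩
  calc ‖f x‖ ≤ ‖f y‖ * (x / y) ^ C :=
        norm_le_mul_div_rpow_of_norm_smul_deriv_right_le hy.1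
          (hf.mono fun z hz ↦ ⟨hy.1.trans_le hz.1, hz.2⟩)
          (fun z hz ↦ hf' z (Ico_subset hz)) (fun z hz ↦ bound z (Ico_subset hz))
          x ⟨hy.2.le, hx.2⟩
    _ = ‖f y‖ / y ^ C * x ^ C := by
        rw [Real.div_rpow hx.1.le hy.1.le]
        ring

theorem isLittleO_pow_of_iteratedDerivWithin_eq_zero {f : ℝ → E} {s : Set ℝ} {x₀ : ℝ} {n : ℕ}
    (hs : Convex ℝ s) (hx₀ : x₀ ∈ s) (hf : ContDiffWithinAt ℝ n f s x₀)
    (hflat : ∀ k ≤ n, iteratedDerivWithin k f s x₀ = 0) :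
    f =o[𝓝[s] x₀] fun x ↦ (x - x₀) ^ n := by
  obtain ⟨u, hu_open, hx₀u, hfu⟩ := hf.contDiffOn' le_rfl (by simp)
  rw [insert_eq_of_mem hx₀] at hfu
  obtain ⟨ε, hε, hball⟩ := Metric.isOpen_iff.1 hu_open x₀ hx₀u
  have hball_nhds : Metric.ball x₀ ε ∈ 𝓝 x₀ := Metric.ball_mem_nhds x₀ hε
  have taylor := taylor_isLittleO (hs.inter (convex_ball x₀ ε)) ⟨hx₀, Metric.mem_ball_self hε⟩
    (hfu.mono (inter_subset_inter_right s hball))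
  have taylor_eq_zero (x : ℝ) : taylorWithinEval f n (s ∩ Metric.ball x₀ ε) x₀ x = 0 := by
    rw [taylor_within_apply]
    refine Finset.sum_eq_zero fun k hk ↦ ?_
    rw [iteratedDerivWithin, iteratedFDerivWithin_inter hball_nhds, ← iteratedDerivWithin,
      hflat k (Finset.mem_range_succ_iff.1 hk), smul_zero]
  simpa only [taylor_eq_zero, sub_zero, nhdsWithin_inter_of_mem' (mem_nhdsWithin_of_mem_nhds
    hball_nhds)] using taylor

theorem stmt_0_general {f : ℝ → E} {C b : ℝ} {n : ℕ} (hCn : C ≤ n)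
    (hf : DifferentiableOn ℝ f (Icc 0 b)) (hsmooth : ContDiffWithinAt ℝ n f (Icc 0 b) 0)
    (hflat : ∀ k ≤ n, iteratedDerivWithin k f (Icc 0 b) 0 = 0)
    (hineq : ∀ x ∈ Icc 0 b, ‖x • derivWithin f (Icc 0 b) x‖ ≤ C * ‖f x‖) :
    ∀ x ∈ Icc 0 b, f x = 0 := by
  intro x hx
  obtain rfl | hx₀ := hx.1.eq_or_lt
  · simpa using hflat 0 n.zero_le
  have hb : 0 < b := hx₀.trans_le hx.2
  have isLittleO_pow : f =o[𝓝[>] 0] fun y : ℝ ↦ y ^ n := by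
    simpa only [sub_zero] using (isLittleO_pow_of_iteratedDerivWithin_eq_zero (convex_Icc 0 b)
      (left_mem_Icc.2 hb.le) hsmooth hflat).mono (nhdsWithin_le_of_mem (Icc_mem_nhdsGT hb))
  have pow_isBigO_rpow : (fun y : ℝ ↦ y ^ n) =O[𝓝[>] 0] fun y : ℝ ↦ y ^ C := by
    refine .of_norm_eventuallyLE ?_
    filter_upwards [Ioo_mem_nhdsGT one_pos] with y hy
    rw [Real.norm_of_nonneg (pow_nonneg hy.1.le n), ← Real.rpow_natCast]
    exact Real.rpow_le_rpow_of_exponent_ge hy.1 hy.2.le hCn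
  exact eq_zero_of_norm_smul_deriv_right_le_of_isLittleO_rpow
    (hf.continuousOn.mono Ioc_subset_Icc_self)
    (fun y hy ↦ (hf y (Ioo_subset_Icc_self hy)).hasDerivWithinAt.mono_of_mem_nhdsWithin
      (mem_nhdsWithin_of_mem_nhds (Icc_mem_nhds hy.1 hy.2)))
    (fun y hy ↦ hineq y (Ioo_subset_Icc_self hy))
    (isLittleO_pow.trans_isBigO pow_isBigO_rpow) x ⟨hx₀, hx.2⟩

end NormedSpace

/-- **Stoica's theorem.** If `f` is `C¹` on `[0,1]`, infinitely (one-sidedly)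
differentiable at `0` with all derivatives vanishing there, and
`|x·f′(x)| ≤ C·|f(x)|` on `[0,1]` for some `C > 0`, then `f ≡ 0` on `[0,1]`. -/
theorem stmt_0 (f : ℝ → ℝ) (C : ℝ) (hC : 0 < C)
    (hf : ContDiffOn ℝ 1 f (Icc 0 1))
    (hsmooth : ContDiffWithinAt ℝ (⊤ : ℕ∞) f (Icc 0 1) 0)
    (hflat : ∀ n : ℕ, iteratedDerivWithin n f (Icc 0 1) 0 = 0)
    (hineq : ∀ x ∈ Icc (0 : ℝ) 1, |x * derivWithin f (Icc 0 1) x| ≤ C * |f x|) :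
    ∀ x ∈ Icc (0 : ℝ) 1, f x = 0 := by
  obtain ⟨n, hn⟩ := exists_nat_ge C
  exact stmt_0_general hn (hf.differentiableOn one_ne_zero) (contDiffWithinAt_infty.1 hsmooth n)
    (fun k _ ↦ hflat k) hineq
end

section
/- Let f : [0,1] → ℝ be continuously differentiable and suppose there is a constant C > 0 with |x·f′(x)| ≤ C·|f(x)| for every x ∈ [0,1]. If x₀ ∈ (0,1) satisfies f(x₀) = 0, then f(x) = 0 for every x ∈ [x₀, 1]. -/
open Set Filter
open scoped Topology

/-!
To the right of `x₀ > 0` the weight `x` is at least `x₀`, so the inequality becomes the linear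
differential inequality `‖f' x‖ ≤ (C / x₀) * ‖f x‖`, and Grönwall's inequality started at the zero
`x₀` gives `f = 0`.
-/

theorem norm_le_div_of_norm_smul_le {𝕜 E : Type*} [NormedField 𝕜] [SeminormedAddCommGroup E]
    [NormedSpace 𝕜 E] {c : 𝕜} {v : E} {m M : ℝ} (hm : 0 < m) (hc : m ≤ ‖c‖)
    (h : ‖c • v‖ ≤ M) : ‖v‖ ≤ M / m := by
  rw [le_div_iff₀' hm]
  calc m * ‖v‖ ≤ ‖c‖ * ‖v‖ := by gcongr
    _ = ‖c • v‖ := (norm_smul c v).symm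
    _ ≤ M := h

section

variable {E : Type*} [NormedAddCommGroup E] [NormedSpace ℝ E] {f : ℝ → E} {a b : ℝ}

theorem hasDerivWithinAt_Ici_of_differentiableWithinAt_Icc {x : ℝ}
    (hf : DifferentiableWithinAt ℝ f (Icc a b) x) (hx : x ∈ Ico a b) :
    HasDerivWithinAt f (derivWithin f (Icc a b) x) (Ici x) x :=
  hf.hasDerivWithinAt.mono_of_mem_nhdsWithin (Icc_mem_nhdsGE_of_mem hx)

theorem stmt_1_general {C x₀ : ℝ} (hf : DifferentiableOn ℝ f (Icc a b)) (hax₀ : a ≤ x₀)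
    (hx₀ : 0 < x₀) (hfx₀ : f x₀ = 0)
    (hineq : ∀ x ∈ Ico x₀ b, ‖x • derivWithin f (Icc a b) x‖ ≤ C * ‖f x‖) :
    ∀ x ∈ Icc x₀ b, f x = 0 := by
  have hcont : ContinuousOn f (Icc x₀ b) := hf.continuousOn.mono (Icc_subset_Icc_left hax₀)
  have hderiv : ∀ x ∈ Ico x₀ b,
      HasDerivWithinAt f (derivWithin f (Icc a b) x) (Ici x) x := fun x hx ↦
    have hxab : x ∈ Ico a b := Ico_subset_Ico_left hax₀ hx
    hasDerivWithinAt_Ici_of_differentiableWithinAt_Icc (hf x (Ico_subset_Icc_self hxab)) hxab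
  have hbound : ∀ x ∈ Ico x₀ b, ‖derivWithin f (Icc a b) x‖ ≤ C / x₀ * ‖f x‖ := fun x hx ↦ by
    rw [div_mul_eq_mul_div]
    exact norm_le_div_of_norm_smul_le hx₀ (hx.1.trans (Real.le_norm_self x)) (hineq x hx)
  exact eq_zero_of_abs_deriv_le_mul_abs_self_of_eq_zero_right hcont hderiv hfx₀ hbound

end

/-- If `f` is `C¹` on `[0,1]` with `|x·f′(x)| ≤ C·|f(x)|` on `[0,1]` for some `C > 0`,
then a zero of `f` at an interior point `x₀ ∈ (0,1)` propagates to the right: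
`f = 0` on `[x₀, 1]`. -/
theorem stmt_1 (f : ℝ → ℝ) (C : ℝ) (hC : 0 < C)
    (hf : ContDiffOn ℝ 1 f (Icc 0 1))
    (hineq : ∀ x ∈ Icc (0 : ℝ) 1, |x * derivWithin f (Icc 0 1) x| ≤ C * |f x|)
    (x₀ : ℝ) (hx₀ : x₀ ∈ Ioo (0 : ℝ) 1) (hfx₀ : f x₀ = 0) :
    ∀ x ∈ Icc x₀ 1, f x = 0 :=
  stmt_1_general (hf.differentiableOn one_ne_zero) hx₀.1.le hx₀.1 hfx₀
    fun x hx ↦ hineq x ⟨hx₀.1.le.trans hx.1, hx.2.le⟩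
end

section
/- Let f : [0,1] → ℝ be continuously differentiable and suppose there is a constant C > 0 with |x·f′(x)| ≤ C·|f(x)| for every x ∈ [0,1]. If 0 < δ ≤ 1 and f(x) > 0 for all x ∈ (0, δ], then f(x) ≥ (f(δ)/δ^C)·x^C for every x ∈ (0, δ]. -/
open Set Filter
open scoped Topology

/-! In the variable `t = log x`, the quotient `f x / x ^ C` is Gronwall's `u t * exp (-C * t)`. Its
derivative has the sign of `x * f' x - C * f x ≤ 0`, so the quotient is antitone on `(0, δ]`. -/

section

variable {f f' : ℝ → ℝ} {C : ℝ}

theorem hasDerivWithinAt_div_rpow {s : Set ℝ} {d x : ℝ} (hx : 0 < x)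
    (hf : HasDerivWithinAt f d s x) :
    HasDerivWithinAt (fun y ↦ f y / y ^ C) ((x * d - C * f x) / x ^ (C + 1)) s x := by
  have hpow_pos : 0 < x ^ C := Real.rpow_pos_of_pos hx C
  have hpow : HasDerivWithinAt (fun y : ℝ ↦ y ^ C) (C * x ^ (C - 1)) s x :=
    (Real.hasDerivAt_rpow_const (Or.inl hx.ne')).hasDerivWithinAt
  refine (hf.fun_div hpow hpow_pos.ne').congr_deriv ?_
  rw [Real.rpow_sub_one hx.ne', Real.rpow_add_one hx.ne']
  field_simp

theorem antitoneOn_div_rpow_of_mul_deriv_le {s : Set ℝ} (hs : Convex ℝ s) (hs_pos : s ⊆ Ioi 0)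
    (hf : ContinuousOn f s)
    (hf' : ∀ x ∈ interior s, HasDerivWithinAt f (f' x) (interior s) x)
    (hle : ∀ x ∈ interior s, x * f' x ≤ C * f x) :
    AntitoneOn (fun x ↦ f x / x ^ C) s := by
  have hpos {x : ℝ} (hx : x ∈ interior s) : 0 < x := hs_pos (interior_subset hx)
  have hcont : ContinuousOn (fun x ↦ f x / x ^ C) s :=
    hf.div (continuousOn_id.rpow_const fun x hx ↦ Or.inl (hs_pos hx).ne')
      fun x hx ↦ (Real.rpow_pos_of_pos (hs_pos hx) C).ne'
  exact antitoneOn_of_hasDerivWithinAt_nonpos hs hcont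
    (fun x hx ↦ hasDerivWithinAt_div_rpow (hpos hx) (hf' x hx))
    fun x hx ↦ div_nonpos_of_nonpos_of_nonneg (sub_nonpos.2 (hle x hx))
      (Real.rpow_nonneg (hpos hx).le _)

theorem stmt_2_general {δ : ℝ} (hf : ContinuousOn f (Ioc 0 δ))
    (hf' : ∀ x ∈ Ioo 0 δ, HasDerivWithinAt f (f' x) (Ioo 0 δ) x)
    (hle : ∀ x ∈ Ioo 0 δ, x * f' x ≤ C * f x) :
    ∀ x ∈ Ioc 0 δ, f δ / δ ^ C * x ^ C ≤ f x := by
  intro x hx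
  rw [← interior_Ioc] at hf' hle
  have hanti : AntitoneOn (fun y ↦ f y / y ^ C) (Ioc 0 δ) :=
    antitoneOn_div_rpow_of_mul_deriv_le (convex_Ioc 0 δ) Ioc_subset_Ioi_self hf hf' hle
  have hquot : f δ / δ ^ C ≤ f x / x ^ C := hanti hx ⟨hx.1.trans_le hx.2, le_rfl⟩ hx.2
  exact (le_div_iff₀ (Real.rpow_pos_of_pos hx.1 C)).1 hquot

end

/-- Polynomial lower bound via Gronwall: if `f` is `C¹` on `[0,1]`,
`|x·f′(x)| ≤ C·|f(x)|` on `[0,1]` for some `C > 0`, and `f > 0` on `(0, δ]` with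
`0 < δ ≤ 1`, then `f(x) ≥ (f(δ)/δ^C)·x^C` on `(0, δ]` (real powers). -/
theorem stmt_2 (f : ℝ → ℝ) (C : ℝ) (hC : 0 < C)
    (hf : ContDiffOn ℝ 1 f (Icc 0 1))
    (hineq : ∀ x ∈ Icc (0 : ℝ) 1, |x * derivWithin f (Icc 0 1) x| ≤ C * |f x|)
    (δ : ℝ) (hδ0 : 0 < δ) (hδ1 : δ ≤ 1)
    (hpos : ∀ x ∈ Ioc (0 : ℝ) δ, 0 < f x) :
    ∀ x ∈ Ioc (0 : ℝ) δ, (f δ / δ ^ C) * x ^ C ≤ f x := by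
  have hsub : Ioc 0 δ ⊆ Icc 0 1 := Ioc_subset_Icc_self.trans (Icc_subset_Icc_right hδ1)
  have hsub' : Ioo 0 δ ⊆ Icc 0 1 := Ioo_subset_Ioc_self.trans hsub
  refine stmt_2_general (hf.continuousOn.mono hsub)
    (fun x hx ↦ (hf.differentiableOn_one x (hsub' hx)).hasDerivWithinAt.mono hsub') fun x hx ↦ ?_
  simpa only [abs_of_pos (hpos x (Ioo_subset_Ioc_self hx))] using
    (le_abs_self _).trans (hineq x (hsub' hx))
end

section
/- Let U ⊆ ℝⁿ be open, a ∈ U, and X : U → ℝⁿ a C¹ vector field with X(a) = 0 such that every eigenvalue of the Jacobian matrix JX(a) has strictly negative real part (a is a hyperbolic sink). Then there exist an open set V ⊆ U containing a and constants θ > 0, λ > 0 such that: for every x ∈ V there is a differentiable curve γ : [0,∞) → U with γ(0) = x and γ′(t) = X(γ(t)) for all t ≥ 0, and every such curve satisfies ‖γ(t) − a‖ ≤ θ·e^{−λ t}·‖x − a‖ for all t > 0. -/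
open Set Filter
open scoped Topology

/-!
Let `A` be the derivative of `X` at `a`. Since the spectrum of `A` is compact and lies in the open
left half-plane, `1 + ε • A` has spectral radius less than one for small `ε > 0`, and therefore
contracts in a suitable equivalent norm. By differentiability the nonlinear Euler step
`x ↦ x + ε • X x` still contracts towards `a`, by a factor `q < 1`, on a small ball for that norm.
For a solution `γ`, the curve `exp (t / ε) • (γ t - a)` has derivative
`(exp (t / ε) / ε) • (γ t + ε • X (γ t) - a)`, whose norm is at most `q / ε` times that of the curve
itself. Hence solutions cannot leave the ball, and Grönwall's inequality gives
`‖γ t - a‖ ≤ exp (-(1 - q) / ε * t) * ‖γ 0 - a‖` in the adapted norm. Existence for all positive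
times follows by solving the equation for a bounded Lipschitz extension of `X` from the ball.
-/

section SpectralContraction

variable {R : Type*} [NormedRing R] [NormedAlgebra ℂ R] [CompleteSpace R] {b : R}

theorem tendsto_pow_nhds_zero_of_spectralRadius_lt_one (hb : spectralRadius ℂ b < 1) :
    Tendsto (fun k : ℕ ↦ b ^ k) atTop (𝓝 0) := by
  obtain ⟨q, hbq, hq1⟩ := exists_between hb
  lift q to NNReal using (hq1.trans ENNReal.one_lt_top).ne
  have norm_pow_le : ∀ᶠ k : ℕ in atTop, ‖b ^ k‖ ≤ (q : ℝ) ^ k := by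
    have root_lt :=
      (spectrum.pow_nnnorm_pow_one_div_tendsto_nhds_spectralRadius b).eventually_lt_const hbq
    filter_upwards [root_lt, eventually_ne_atTop 0] with k hk hk0
    rw [one_div, ENNReal.rpow_inv_lt_iff (by positivity), ENNReal.rpow_natCast] at hk
    exact_mod_cast hk.le
  exact squeeze_zero_norm' norm_pow_le
    (tendsto_pow_atTop_nhds_zero_of_lt_one q.2 (by exact_mod_cast hq1))

theorem norm_one_add_real_mul_lt_one {z : ℂ} {ε : ℝ} (hε : 0 < ε)
    (h : ε * ‖z‖ ^ 2 < -2 * z.re) : ‖1 + (ε : ℂ) * z‖ < 1 := by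
  have norm_sq : ‖1 + (ε : ℂ) * z‖ ^ 2 = 1 + ε * (2 * z.re + ε * ‖z‖ ^ 2) := by
    simp only [Complex.sq_norm, Complex.normSq_apply, Complex.add_re, Complex.add_im,
      Complex.one_re, Complex.one_im, Complex.re_ofReal_mul, Complex.im_ofReal_mul]
    ring
  have : ε * (2 * z.re + ε * ‖z‖ ^ 2) < 0 := mul_neg_of_pos_of_neg hε (by linarith)
  exact (sq_lt_one_iff₀ (norm_nonneg _)).1 (by linarith)

theorem exists_spectralRadius_one_add_smul_lt_one (hb : ∀ z ∈ spectrum ℂ b, z.re < 0) :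
    ∃ ε : ℝ, 0 < ε ∧ spectralRadius ℂ (1 + (ε : ℂ) • b) < 1 := by
  cases subsingleton_or_nontrivial R with
  | inl _ => exact ⟨1, one_pos, by simp [spectrum.SpectralRadius.of_subsingleton]⟩
  | inr _ =>
    obtain ⟨w, hw, hmax⟩ := (spectrum.isCompact (𝕜 := ℂ) b).exists_isMaxOn (spectrum.nonempty b)
      Complex.continuous_re.continuousOn
    obtain ⟨C, hC⟩ := (spectrum.isBounded (𝕜 := ℂ) b).exists_norm_le
    have re_gap : 0 < -2 * w.re := by linarith [hb w hw]
    obtain ⟨ε, hε, hεC⟩ := exists_pos_mul_lt re_gap (C ^ 2)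
    refine ⟨ε, hε, spectrum.spectralRadius_lt_of_forall_lt (r := 1) _ fun z hz ↦ ?_⟩
    rw [← map_one (algebraMap ℂ R), ← spectrum.singleton_add_eq,
      spectrum.smul_eq_smul _ _ (spectrum.nonempty b), singleton_add] at hz
    obtain ⟨_, ⟨z, hz, rfl⟩, rfl⟩ := hz
    refine norm_one_add_real_mul_lt_one hε ?_
    calc ε * ‖z‖ ^ 2 ≤ C ^ 2 * ε := by rw [mul_comm]; gcongr; exact hC z hz
      _ < -2 * w.re := hεC
      _ ≤ -2 * z.re := by linarith [show z.re ≤ w.re from hmax hz]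

theorem exists_norm_one_add_smul_pow_lt_one_of_injective_algHom {S : Type*} [NormedRing S]
    [NormedAlgebra ℝ S] [FiniteDimensional ℝ S]
    {Φ : S →ₐ[ℝ] R} (hΦ : Function.Injective Φ) {s : S}
    (hs : ∀ z ∈ spectrum ℂ (Φ s), z.re < 0) :
    ∃ ε : ℝ, 0 < ε ∧ ∃ N : ℕ, N ≠ 0 ∧ ‖(1 + ε • s) ^ N‖ < 1 := by
  obtain ⟨ε, hε, hlt⟩ := exists_spectralRadius_one_add_smul_lt_one hs
  have map_pow_tendsto : Tendsto (Φ ∘ fun k : ℕ ↦ (1 + ε • s) ^ k) atTop (𝓝 (Φ 0)) := by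
    have coe_smul : (ε : ℂ) • Φ s = ε • Φ s := Complex.coe_smul ε (Φ s)
    simpa [Function.comp_def, coe_smul] using tendsto_pow_nhds_zero_of_spectralRadius_lt_one hlt
  have embedding : Topology.IsClosedEmbedding Φ.toLinearMap :=
    LinearMap.isClosedEmbedding_of_injective (LinearMap.ker_eq_bot.2 hΦ)
  have pow_tendsto : Tendsto (fun k : ℕ ↦ (1 + ε • s) ^ k) atTop (𝓝 0) :=
    embedding.isInducing.tendsto_nhds_iff.2 map_pow_tendsto
  have norm_lt := pow_tendsto.norm.eventually_lt_const (by simp : ‖(0 : S)‖ < 1)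
  obtain ⟨N, hN, hN0⟩ := (norm_lt.and (eventually_ne_atTop 0)).exists
  exact ⟨ε, hε, N, hN0, hN⟩

end SpectralContraction

attribute [local instance] Matrix.linftyOpNormedRing Matrix.linftyOpNormedAlgebra in
theorem exists_norm_one_add_smul_pow_lt_one {E : Type*} [NormedAddCommGroup E] [NormedSpace ℝ E]
    [FiniteDimensional ℝ E] {A : E →L[ℝ] E}
    (hA : ∀ μ : ℂ, (A.toLinearMap.charpoly.map (algebraMap ℝ ℂ)).IsRoot μ → μ.re < 0) :
    ∃ ε : ℝ, 0 < ε ∧ ∃ N : ℕ, N ≠ 0 ∧ ‖(1 + ε • A) ^ N‖ < 1 := by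
  let basis := Module.finBasis ℝ E
  let toComplexMatrix := (Algebra.ofId ℝ ℂ).mapMatrix.comp
    ((LinearMap.toMatrixAlgEquiv basis).toAlgHom.comp
      (Module.End.toContinuousLinearMap E).symm.toAlgHom)
  have toComplexMatrix_injective : Function.Injective toComplexMatrix :=
    (Matrix.map_injective (algebraMap ℝ ℂ).injective).comp
      ((LinearMap.toMatrixAlgEquiv basis).injective.comp ContinuousLinearMap.coe_injective)
  refine exists_norm_one_add_smul_pow_lt_one_of_injective_algHom toComplexMatrix_injective
    fun μ hμ ↦ hA μ ?_
  rw [Matrix.mem_spectrum_iff_isRoot_charpoly] at hμ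
  rw [← LinearMap.charpoly_toMatrix _ basis, ← Matrix.charpoly_map]
  exact hμ

theorem charpoly_map_ofReal_of_single {ι : Type*} [Fintype ι] [DecidableEq ι]
    (A : EuclideanSpace ℝ ι →L[ℝ] EuclideanSpace ℝ ι) :
    ((Matrix.of fun i j ↦ A (EuclideanSpace.single j 1) i).map Complex.ofReal).charpoly =
      A.toLinearMap.charpoly.map (algebraMap ℝ ℂ) := by
  rw [← A.toLinearMap.charpoly_toMatrix (EuclideanSpace.basisFun ι ℝ).toBasis,
    ← Matrix.charpoly_map]
  congr 1

section BoundedLipschitzExtension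

variable {E : Type*} [NormedAddCommGroup E] [NormedSpace ℝ E]

/-- The radial retraction of a real normed space onto the closed ball of radius `r > 0` about the
origin. Precomposing with it turns a vector field that is Lipschitz on a ball into one that is
Lipschitz and bounded on the whole space. -/
noncomputable def radialRetraction (r : ℝ) (x : E) : E := (r / max r ‖x‖) • x

variable {r : ℝ}

theorem radialRetraction_eq_self (hr : 0 < r) {x : E} (hx : ‖x‖ ≤ r) :
    radialRetraction r x = x := by
  rw [radialRetraction, max_eq_left hx, div_self hr.ne', one_smul]

theorem norm_radialRetraction_le (hr : 0 < r) (x : E) : ‖radialRetraction r x‖ ≤ r := by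
  have hmax : 0 < max r ‖x‖ := lt_max_of_lt_left hr
  rw [radialRetraction, norm_smul, Real.norm_of_nonneg (by positivity), div_mul_eq_mul_div,
    div_le_iff₀ hmax]
  gcongr
  exact le_max_right _ _

theorem lipschitzWith_radialRetraction (hr : 0 < r) :
    LipschitzWith 2 (radialRetraction r : E → E) := by
  refine LipschitzWith.of_dist_le_mul fun x y ↦ ?_
  rw [dist_eq_norm, dist_eq_norm]
  set s := max r ‖x‖ with hs
  set t := max r ‖y‖ with ht
  have hs0 : 0 < s := lt_max_of_lt_left hr
  have ht0 : 0 < t := lt_max_of_lt_left hr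
  have abs_sub_le : |t - s| ≤ ‖x - y‖ := by
    rw [norm_sub_rev]
    exact (abs_max_sub_max_le_max r ‖y‖ r ‖x‖).trans (by simpa using abs_norm_sub_norm_le y x)
  have div_le_one : r / s ≤ 1 := div_le_one_of_le₀ (le_max_left _ _) hs0.le
  have norm_div_le_one : ‖y‖ / t ≤ 1 := div_le_one_of_le₀ (le_max_right _ _) ht0.le
  calc ‖radialRetraction r x - radialRetraction r y‖
      = ‖(r / s) • (x - y) + (r / s * ((t - s) / t)) • y‖ := by
        rw [radialRetraction, radialRetraction, ← hs, ← ht,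
          show r / s * ((t - s) / t) = r / s - r / t by field_simp]
        congr 1
        module
    _ ≤ r / s * ‖x - y‖ + r / s * |t - s| * (‖y‖ / t) := by
        refine (norm_add_le _ _).trans_eq ?_
        rw [norm_smul, norm_smul, norm_mul, Real.norm_of_nonneg (by positivity : 0 ≤ r / s),
          norm_div, Real.norm_of_nonneg ht0.le, Real.norm_eq_abs]
        ring
    _ ≤ 1 * ‖x - y‖ + 1 * ‖x - y‖ * 1 := by gcongr
    _ = (2 : NNReal) * ‖x - y‖ := by push_cast; ring

theorem exists_lipschitzWith_bounded_eqOn_closedBall {F : Type*} [SeminormedAddCommGroup F]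
    {f : E → F} {a : E} {K : NNReal} (hr : 0 < r)
    (hf : LipschitzOnWith K f (Metric.closedBall a r)) :
    ∃ (g : E → F) (L : NNReal), LipschitzWith (K * 2) g ∧ (∀ x, ‖g x‖ ≤ L) ∧
      EqOn g f (Metric.closedBall a r) := by
  let retract (x : E) : E := a + radialRetraction r (x - a)
  have retract_mem (x : E) : retract x ∈ Metric.closedBall a r := by
    simpa [retract] using norm_radialRetraction_le hr (x - a)
  have retract_lipschitz : LipschitzWith 2 retract :=
    LipschitzWith.of_dist_le_mul fun x y ↦ by
      simpa [retract] using (lipschitzWith_radialRetraction hr).dist_le_mul (x - a) (y - a)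
  have bounded : ∀ x, ‖f (retract x)‖ ≤ ‖f a‖ + K * r := fun x ↦ by
    have ha : a ∈ Metric.closedBall a r := Metric.mem_closedBall_self hr.le
    calc ‖f (retract x)‖ ≤ ‖f a‖ + dist (f (retract x)) (f a) := by
          rw [dist_eq_norm]; exact norm_le_insert' _ _
      _ ≤ ‖f a‖ + K * dist (retract x) a := by gcongr; exact hf.dist_le_mul _ (retract_mem x) _ ha
      _ ≤ ‖f a‖ + K * r := by gcongr; exact retract_mem x
  refine ⟨f ∘ retract, (‖f a‖ + K * r).toNNReal, ?_, ?_, fun x hx ↦ ?_⟩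
  · exact lipschitzOnWith_univ.1
      (hf.comp retract_lipschitz.lipschitzOnWith fun x _ ↦ retract_mem x)
  · exact fun x ↦ (bounded x).trans (Real.le_coe_toNNReal _)
  · have : retract x = x := by
      simp [retract, radialRetraction_eq_self hr (mem_closedBall_iff_norm.1 hx)]
    rw [Function.comp_apply, this]

end BoundedLipschitzExtension

section GlobalExistence

variable {E : Type*} [NormedAddCommGroup E] [NormedSpace ℝ E] [CompleteSpace E]
  {v : ℝ → E → E} {K L : NNReal}

theorem exists_forall_mem_Ioo_hasDerivAt_of_lipschitzWith_of_bounded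
    (hlip : ∀ t, LipschitzWith K (v t)) (hcont : ∀ x, Continuous (v · x))
    (hbdd : ∀ t x, ‖v t x‖ ≤ L) (x : E) {T : ℝ} (hT : 0 < T) :
    ∃ γ : ℝ → E, γ 0 = x ∧ ∀ t ∈ Ioo (-T) T, HasDerivAt γ (v t (γ t)) t := by
  have picardLindelof : IsPicardLindelof v (tmin := -T) (tmax := T) ⟨0, by simp [hT.le]⟩ x
      (L * T.toNNReal) 0 L K :=
    { lipschitzOnWith := fun t _ ↦ (hlip t).lipschitzOnWith
      continuousOn := fun y _ ↦ (hcont y).continuousOn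
      norm_le := fun t _ y _ ↦ hbdd t y
      mul_max_le := by simp [hT.le] }
  obtain ⟨γ, hγ0, hγ⟩ := picardLindelof.exists_eq_forall_mem_Icc_hasDerivWithinAt₀
  exact ⟨γ, hγ0, fun t ht ↦
    (hγ t (Ioo_subset_Icc_self ht)).hasDerivAt (Icc_mem_nhds ht.1 ht.2)⟩

theorem exists_isIntegralCurve_of_lipschitzWith_of_bounded
    (hlip : ∀ t, LipschitzWith K (v t)) (hcont : ∀ x, Continuous (v · x))
    (hbdd : ∀ t x, ‖v t x‖ ≤ L) (x : E) :
    ∃ γ : ℝ → E, γ 0 = x ∧ IsIntegralCurve γ v := by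
  choose! g hg0 hg using fun T (hT : (0 : ℝ) < T) ↦
    exists_forall_mem_Ioo_hasDerivAt_of_lipschitzWith_of_bounded hlip hcont hbdd x hT
  have g_eqOn {S T : ℝ} (hS : 0 < S) (hST : S ≤ T) : EqOn (g S) (g T) (Ioo (-S) S) := by
    have hT : 0 < T := hS.trans_le hST
    have hsub : Ioo (-S) S ⊆ Ioo (-T) T := Ioo_subset_Ioo (neg_le_neg hST) hST
    exact ODE_solution_unique_of_mem_Ioo (s := fun _ ↦ univ) (t₀ := 0)
      (fun t _ ↦ (hlip t).lipschitzOnWith) ⟨neg_lt_zero.2 hS, hS⟩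
      (fun t ht ↦ ⟨hg S hS t ht, trivial⟩) (fun t ht ↦ ⟨hg T hT t (hsub ht), trivial⟩)
      (by rw [hg0 S hS, hg0 T hT])
  have glued_eq {s T : ℝ} (hs : |s| + 1 ≤ T) : g (|s| + 1) s = g T s :=
    g_eqOn (by positivity) hs (abs_lt.1 (lt_add_one |s|))
  refine ⟨fun t ↦ g (|t| + 1) t, hg0 _ (by positivity), fun t ↦ ?_⟩
  have eventually_eq : (fun s ↦ g (|s| + 1) s) =ᶠ[𝓝 t] g (|t| + 2) := by
    filter_upwards [continuous_abs.continuousAt.eventually_lt_const (lt_add_one |t|)] with s hs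
    exact glued_eq (by linarith)
  have deriv_at := hg (|t| + 2) (by positivity) t (abs_lt.1 (by linarith))
  rw [← eventually_eq.self_of_nhds] at deriv_at
  exact deriv_at.congr_of_eventuallyEq eventually_eq

end GlobalExistence

section ExponentialStability

variable {E : Type*} [NormedAddCommGroup E] [NormedSpace ℝ E]

/-- `γ` solves `x' = X x` in `U` for nonnegative times, starting at `x`. The curve is
defined on all of `ℝ`, so its derivative at time `0` is two-sided. -/
def IsForwardSolution (X : E → E) (U : Set E) (x : E) (γ : ℝ → E) : Prop :=
  γ 0 = x ∧ ∀ t, 0 ≤ t → γ t ∈ U ∧ HasDerivAt γ (X (γ t)) t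

/-- Exponential stability of the point `a` for the equation `x' = X x` in `U`: from every point near
`a` there is a solution in `U` for all nonnegative times, and all such solutions converge to `a` at
a common exponential rate. -/
def IsExponentiallyStable (X : E → E) (U : Set E) (a : E) : Prop :=
  ∃ V : Set E, IsOpen V ∧ a ∈ V ∧ V ⊆ U ∧
    ∃ θ > (0 : ℝ), ∃ l > (0 : ℝ), ∀ x ∈ V,
      (∃ γ, IsForwardSolution X U x γ) ∧
      ∀ γ, IsForwardSolution X U x γ →
        ∀ t : ℝ, 0 < t → ‖γ t - a‖ ≤ θ * Real.exp (-l * t) * ‖x - a‖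

end ExponentialStability

theorem exists_pos_lt_one_le_pow {c : ℝ} (hc : c < 1) (N : ℕ) :
    ∃ ρ : ℝ, 0 < ρ ∧ ρ < 1 ∧ c ≤ ρ ^ N := by
  have eventually_lt : ∀ᶠ ρ : ℝ in 𝓝[<] 1, c < ρ ^ N :=
    ((continuous_pow N).continuousWithinAt.tendsto).eventually_const_lt (by simpa using hc)
  obtain ⟨ρ, hcρ, hρ⟩ := (eventually_lt.and (Ioo_mem_nhdsLT zero_lt_one)).exists
  exact ⟨ρ, hρ.1, hρ.2, hcρ.le⟩

section AdaptedNorm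

variable {E : Type*} [NormedAddCommGroup E] [NormedSpace ℝ E]

-- The embedding is `x ↦ (ρ⁻ᵏ Bᵏ x)_{k < N}`, where `‖B ^ N‖ ≤ ρ ^ N`.
theorem exists_embedding_norm_map_le_of_norm_pow_lt_one {B : E →L[ℝ] E} {N : ℕ} (hN : N ≠ 0)
    (hB : ‖B ^ N‖ < 1) :
    ∃ (J : E →L[ℝ] (Fin N → E)) (ρ : ℝ), ρ < 1 ∧ (∀ x, ‖x‖ ≤ ‖J x‖) ∧
      ∀ x, ‖J (B x)‖ ≤ ρ * ‖J x‖ := by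
  obtain ⟨ρ, hρ0, hρ1, hρN⟩ := exists_pos_lt_one_le_pow hB N
  let J : E →L[ℝ] (Fin N → E) := ContinuousLinearMap.pi fun k ↦ (ρ ^ (k : ℕ))⁻¹ • B ^ (k : ℕ)
  have norm_J_apply (x : E) (k : Fin N) : ‖J x k‖ = (ρ ^ (k : ℕ))⁻¹ * ‖(B ^ (k : ℕ)) x‖ := by
    simp [J, norm_smul, abs_of_pos hρ0]
  have norm_pow_le (x : E) {k : ℕ} (hk : k < N) : ‖(B ^ k) x‖ ≤ ρ ^ k * ‖J x‖ := by
    rw [← inv_mul_le_iff₀ (by positivity), ← norm_J_apply x ⟨k, hk⟩]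
    exact norm_le_pi_norm _ _
  have norm_le (x : E) : ‖x‖ ≤ ‖J x‖ := by simpa using norm_pow_le x (Nat.pos_of_ne_zero hN)
  have norm_pow_succ_le (x : E) (k : Fin N) : ‖(B ^ (k + 1 : ℕ)) x‖ ≤ ρ ^ (k + 1 : ℕ) * ‖J x‖ := by
    obtain hk | hk : k + 1 < N ∨ k + 1 = N := Nat.lt_or_eq_of_le k.2
    · exact norm_pow_le x hk
    · rw [hk]
      exact (B ^ N).le_of_opNorm_le_of_le hρN (norm_le x)
  refine ⟨J, ρ, hρ1, norm_le, fun x ↦ (pi_norm_le_iff_of_nonneg (by positivity)).2 fun k ↦ ?_⟩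
  rw [norm_J_apply, inv_mul_le_iff₀ (by positivity), ← mul_assoc, ← pow_succ]
  simpa [pow_succ] using norm_pow_succ_le x k

end AdaptedNorm

section EulerStep

variable {E F : Type*} [NormedAddCommGroup E] [NormedSpace ℝ E] [NormedAddCommGroup F]
  [NormedSpace ℝ F] {J : E →L[ℝ] F} {X Y : E → E} {a : E} {ε q r : ℝ}

/-- One step of size `ε` of the explicit Euler scheme for `x' = X x`. -/
def eulerStep (X : E → E) (ε : ℝ) (x : E) : E := x + ε • X x

/-- The Euler step of size `ε` for `X` contracts towards `a` by the factor `q` on the `r`-ball about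
`a`, where the distance to `a` is the adapted one, `‖J (x - a)‖`. -/
def IsEulerContraction (J : E →L[ℝ] F) (X : E → E) (a : E) (ε q r : ℝ) : Prop :=
  ∀ x, ‖J (x - a)‖ < r → ‖J (eulerStep X ε x - a)‖ ≤ q * ‖J (x - a)‖

theorem hasFDerivAt_eulerStep {A : E →L[ℝ] E} (hX : HasFDerivAt X A a) :
    HasFDerivAt (eulerStep X ε) (1 + ε • A) a :=
  (hasFDerivAt_id a).add (hX.const_smul ε)

theorem eventually_norm_eulerStep_sub_le {A : E →L[ℝ] E} {ρ : ℝ} (hX : HasFDerivAt X A a)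
    (hXa : X a = 0) (hJ : ∀ x, ‖x‖ ≤ ‖J x‖) (hJA : ∀ x, ‖J ((1 + ε • A) x)‖ ≤ ρ * ‖J x‖)
    (hρq : ρ < q) : ∀ᶠ x in 𝓝 a, ‖J (eulerStep X ε x - a)‖ ≤ q * ‖J (x - a)‖ := by
  have fixed : eulerStep X ε a = a := by simp [eulerStep, hXa]
  have remainder_isLittleO : (fun x ↦ J (eulerStep X ε x - a - (1 + ε • A) (x - a)))
      =o[𝓝 a] fun x ↦ J (x - a) := by
    have := (hasFDerivAt_eulerStep (ε := ε) hX).isLittleO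
    rw [fixed] at this
    exact ((J.isBigO_comp _ _).trans_isLittleO this).trans_isBigO
      (Asymptotics.isBigO_of_le _ fun x ↦ hJ (x - a))
  filter_upwards [remainder_isLittleO.def (sub_pos.2 hρq)] with x hx
  calc ‖J (eulerStep X ε x - a)‖
      ≤ ‖J ((1 + ε • A) (x - a))‖ + ‖J (eulerStep X ε x - a - (1 + ε • A) (x - a))‖ := by
        rw [map_sub J (eulerStep X ε x - a)]
        exact norm_le_insert' _ _
    _ ≤ ρ * ‖J (x - a)‖ + (q - ρ) * ‖J (x - a)‖ := add_le_add (hJA _) hx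
    _ = q * ‖J (x - a)‖ := by ring

variable {γ : ℝ → E} {t : ℝ}

theorem hasDerivAt_exp_smul_map_sub (hε : ε ≠ 0) (hγ : HasDerivAt γ (X (γ t)) t) :
    HasDerivAt (fun s ↦ Real.exp (s / ε) • J (γ s - a))
      ((Real.exp (t / ε) / ε) • J (eulerStep X ε (γ t) - a)) t := by
  have exp_deriv : HasDerivAt (fun s ↦ Real.exp (s / ε)) (Real.exp (t / ε) / ε) t := by
    simpa [div_eq_mul_inv] using ((hasDerivAt_id t).div_const ε).exp
  refine (exp_deriv.smul (J.hasFDerivAt.comp_hasDerivAt t (hγ.sub_const a))).congr_deriv ?_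
  simp only [eulerStep, Function.comp_apply, map_sub, map_add, map_smul]
  match_scalars <;> field_simp

namespace IsEulerContraction

theorem congr (hX : IsEulerContraction J X a ε q r)
    (hXY : ∀ x, ‖J (x - a)‖ < r → X x = Y x) : IsEulerContraction J Y a ε q r := fun x hx ↦ by
  simpa only [eulerStep, hXY x hx] using hX x hx

theorem norm_deriv_le (hX : IsEulerContraction J X a ε q r) (hε : 0 < ε)
    (ht : ‖J (γ t - a)‖ < r) :
    ‖(Real.exp (t / ε) / ε) • J (eulerStep X ε (γ t) - a)‖ ≤
      q / ε * ‖Real.exp (t / ε) • J (γ t - a)‖ := by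
  rw [norm_smul, norm_smul, Real.norm_of_nonneg (by positivity),
    Real.norm_of_nonneg (by positivity)]
  calc Real.exp (t / ε) / ε * ‖J (eulerStep X ε (γ t) - a)‖
      ≤ Real.exp (t / ε) / ε * (q * ‖J (γ t - a)‖) := by gcongr; exact hX _ ht
    _ = q / ε * (Real.exp (t / ε) * ‖J (γ t - a)‖) := by ring

theorem norm_lt (hX : IsEulerContraction J X a ε q r) (hε : 0 < ε) (hq : q < 1)
    (hγ : ∀ t, 0 ≤ t → HasDerivAt γ (X (γ t)) t) (h0 : ‖J (γ 0 - a)‖ < r) (ht : 0 ≤ t) :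
    ‖J (γ t - a)‖ < r := by
  obtain ⟨s, h0s, hsr⟩ := exists_between h0
  have hs : 0 < s := (norm_nonneg _).trans_lt h0s
  have norm_eq (τ : ℝ) : ‖Real.exp (τ / ε) • J (γ τ - a)‖ = Real.exp (τ / ε) * ‖J (γ τ - a)‖ := by
    rw [norm_smul, Real.norm_of_nonneg (Real.exp_nonneg _)]
  have deriv (τ : ℝ) (hτ : 0 ≤ τ) := hasDerivAt_exp_smul_map_sub (J := J) (a := a) hε.ne' (hγ τ hτ)
  have fence_deriv (τ : ℝ) : HasDerivAt (fun τ ↦ Real.exp (τ / ε) * s)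
      (Real.exp (τ / ε) * ε⁻¹ * s) τ := by
    simpa using (((hasDerivAt_id τ).div_const ε).exp.mul_const s)
  have fenced := image_norm_le_of_norm_deriv_right_lt_deriv_boundary (a := 0) (b := t)
    (fun τ hτ ↦ (deriv τ hτ.1).continuousAt.continuousWithinAt)
    (fun τ hτ ↦ (deriv τ hτ.1).hasDerivWithinAt) (by simpa using h0s.le) fence_deriv
    (fun τ _ hτ ↦ by
      have norm_eq_s : ‖J (γ τ - a)‖ = s :=
        mul_left_cancel₀ (Real.exp_ne_zero _) ((norm_eq τ).symm.trans hτ)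
      refine (hX.norm_deriv_le hε (norm_eq_s.trans_lt hsr)).trans_lt ?_
      rw [hτ]
      calc q / ε * (Real.exp (τ / ε) * s) < 1 / ε * (Real.exp (τ / ε) * s) := by gcongr
        _ = Real.exp (τ / ε) * ε⁻¹ * s := by ring) (right_mem_Icc.2 ht)
  rw [norm_eq] at fenced
  exact (le_of_mul_le_mul_left fenced (Real.exp_pos _)).trans_lt hsr

theorem norm_le_exp (hX : IsEulerContraction J X a ε q r) (hε : 0 < ε) (hq : q < 1)
    (hγ : ∀ t, 0 ≤ t → HasDerivAt γ (X (γ t)) t) (h0 : ‖J (γ 0 - a)‖ < r) (ht : 0 ≤ t) :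
    ‖J (γ t - a)‖ ≤ ‖J (γ 0 - a)‖ * Real.exp (-((1 - q) / ε) * t) := by
  have deriv (τ : ℝ) (hτ : 0 ≤ τ) := hasDerivAt_exp_smul_map_sub (J := J) (a := a) hε.ne' (hγ τ hτ)
  have gronwall := norm_le_gronwallBound_of_norm_deriv_right_le (ε := 0) (a := 0) (b := t)
    (fun τ hτ ↦ (deriv τ hτ.1).continuousAt.continuousWithinAt)
    (fun τ hτ ↦ (deriv τ hτ.1).hasDerivWithinAt) le_rfl
    (fun τ hτ ↦ by
      simpa using hX.norm_deriv_le hε (hX.norm_lt hε hq hγ h0 hτ.1)) t (right_mem_Icc.2 ht)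
  rw [gronwallBound_ε0, norm_smul, norm_smul, Real.norm_of_nonneg (Real.exp_nonneg _),
    Real.norm_of_nonneg (Real.exp_nonneg _), zero_div, Real.exp_zero, one_mul, sub_zero,
    ← le_div_iff₀' (Real.exp_pos _), mul_div_assoc, ← Real.exp_sub] at gronwall
  rwa [show -((1 - q) / ε) * t = q / ε * t - t / ε by ring]

variable [CompleteSpace E] {K : NNReal} {U : Set E} {x : E}

theorem exists_solution (hX : IsEulerContraction J X a ε q r) (hε : 0 < ε) (hq : q < 1)
    (hJ : ∀ x, ‖x‖ ≤ ‖J x‖) (hlip : LipschitzOnWith K X (Metric.closedBall a r))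
    (hx : ‖J (x - a)‖ < r) :
    ∃ γ : ℝ → E, γ 0 = x ∧ ∀ t, 0 ≤ t → ‖J (γ t - a)‖ < r ∧ HasDerivAt γ (X (γ t)) t := by
  have hr : 0 < r := (norm_nonneg _).trans_lt hx
  obtain ⟨Y, L, Y_lipschitz, Y_bounded, Y_eqOn⟩ :=
    exists_lipschitzWith_bounded_eqOn_closedBall hr hlip
  have Y_eq (y : E) (hy : ‖J (y - a)‖ < r) : Y y = X y :=
    Y_eqOn (mem_closedBall_iff_norm.2 ((hJ _).trans hy.le))
  obtain ⟨γ, hγ0, hγ⟩ := exists_isIntegralCurve_of_lipschitzWith_of_bounded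
    (v := fun _ ↦ Y) (fun _ ↦ Y_lipschitz) (fun _ ↦ continuous_const) (fun _ ↦ Y_bounded) x
  have trapped (t : ℝ) (ht : 0 ≤ t) : ‖J (γ t - a)‖ < r :=
    (hX.congr fun y hy ↦ (Y_eq y hy).symm).norm_lt hε hq (fun s _ ↦ hγ s) (hγ0 ▸ hx) ht
  exact ⟨γ, hγ0, fun t ht ↦ ⟨trapped t ht, Y_eq _ (trapped t ht) ▸ hγ t⟩⟩

theorem isExponentiallyStable (hX : IsEulerContraction J X a ε q r) (hε : 0 < ε) (hq : q < 1)
    (hr : 0 < r) (hJ : ∀ x, ‖x‖ ≤ ‖J x‖) (hlip : LipschitzOnWith K X (Metric.closedBall a r))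
    (hU : Metric.closedBall a r ⊆ U) : IsExponentiallyStable X U a := by
  have mem_U (y : E) (hy : ‖J (y - a)‖ < r) : y ∈ U :=
    hU (mem_closedBall_iff_norm.2 ((hJ _).trans hy.le))
  refine ⟨{x | ‖J (x - a)‖ < r}, isOpen_lt (by fun_prop) continuous_const, by simpa using hr,
    mem_U, ‖J‖ + 1, by positivity, (1 - q) / ε, div_pos (sub_pos.2 hq) hε, fun x hx ↦ ⟨?_, ?_⟩⟩
  · obtain ⟨γ, hγ0, hγ⟩ := hX.exists_solution hε hq hJ hlip hx
    exact ⟨γ, hγ0, fun t ht ↦ ⟨mem_U _ (hγ t ht).1, (hγ t ht).2⟩⟩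
  · rintro γ ⟨rfl, hγ⟩ t ht
    calc ‖γ t - a‖ ≤ ‖J (γ t - a)‖ := hJ _
      _ ≤ ‖J (γ 0 - a)‖ * Real.exp (-((1 - q) / ε) * t) :=
        hX.norm_le_exp hε hq (fun s hs ↦ (hγ s hs).2) hx ht.le
      _ ≤ (‖J‖ + 1) * ‖γ 0 - a‖ * Real.exp (-((1 - q) / ε) * t) := by
        gcongr
        exact J.le_of_opNorm_le (by simp) _
      _ = (‖J‖ + 1) * Real.exp (-((1 - q) / ε) * t) * ‖γ 0 - a‖ := by ring

end IsEulerContraction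

theorem isExponentiallyStable_of_norm_one_add_smul_pow_lt_one [CompleteSpace E] {A : E →L[ℝ] E}
    {U : Set E} {N : ℕ} (hX : HasStrictFDerivAt X A a) (hXa : X a = 0) (hU : U ∈ 𝓝 a)
    (hε : 0 < ε) (hN : N ≠ 0) (hA : ‖(1 + ε • A) ^ N‖ < 1) : IsExponentiallyStable X U a := by
  obtain ⟨J, ρ, hρ, norm_le_J, J_contracts⟩ := exists_embedding_norm_map_le_of_norm_pow_lt_one hN hA
  obtain ⟨q, hρq, hq⟩ := exists_between hρ
  obtain ⟨K, s, hs, X_lipschitz⟩ := hX.exists_lipschitzOnWith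
  obtain ⟨r, hr, hball⟩ := Metric.nhds_basis_closedBall.eventually_iff.1
    ((eventually_norm_eulerStep_sub_le hX.hasFDerivAt hXa norm_le_J J_contracts hρq).and
      (inter_mem hs hU))
  have contraction : IsEulerContraction J X a ε q r := fun x hx ↦
    (hball (mem_closedBall_iff_norm.2 ((norm_le_J _).trans hx.le))).1
  exact contraction.isExponentiallyStable hε hq hr norm_le_J
    (X_lipschitz.mono fun x hx ↦ (hball hx).2.1) fun x hx ↦ (hball hx).2.2

end EulerStep

theorem stmt_10_general {E : Type*} [NormedAddCommGroup E] [NormedSpace ℝ E]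
    [FiniteDimensional ℝ E] {X : E → E} {A : E →L[ℝ] E} {U : Set E} {a : E} (hU : U ∈ 𝓝 a)
    (hX : HasStrictFDerivAt X A a) (hXa : X a = 0)
    (hA : ∀ μ : ℂ, (A.toLinearMap.charpoly.map (algebraMap ℝ ℂ)).IsRoot μ → μ.re < 0) :
    IsExponentiallyStable X U a := by
  have : CompleteSpace E := FiniteDimensional.complete ℝ E
  obtain ⟨ε, hε, N, hN, hlt⟩ := exists_norm_one_add_smul_pow_lt_one hA
  exact isExponentiallyStable_of_norm_one_add_smul_pow_lt_one hX hXa hU hε hN hlt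

/-- Exponential stability of a hyperbolic sink: if `X` is a `C¹` vector field on
an open set `U ∋ a` with `X(a) = 0` and all complex eigenvalues of the Jacobian
`JX(a)` having negative real part, then there are a neighborhood `V ∋ a` and
constants `θ, λ > 0` such that through every `x ∈ V` there is a forward solution
of `γ′ = X(γ)` staying in `U`, and every such solution satisfies
`‖γ(t) - a‖ ≤ θ·e^{-λt}·‖x - a‖` for `t > 0`. -/
theorem stmt_10 (n : ℕ) (U : Set (EuclideanSpace ℝ (Fin n))) (hU : IsOpen U)
    (a : EuclideanSpace ℝ (Fin n)) (haU : a ∈ U)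
    (X : EuclideanSpace ℝ (Fin n) → EuclideanSpace ℝ (Fin n))
    (hX : ContDiffOn ℝ 1 X U) (hXa : X a = 0)
    (heig : ∀ μ : ℂ,
      (Matrix.charpoly
        ((Matrix.of fun i j => fderiv ℝ X a (EuclideanSpace.single j 1) i).map
          Complex.ofReal)).IsRoot μ → μ.re < 0) :
    ∃ V : Set (EuclideanSpace ℝ (Fin n)), IsOpen V ∧ a ∈ V ∧ V ⊆ U ∧
      ∃ θ > (0 : ℝ), ∃ l > (0 : ℝ), ∀ x ∈ V,
        (∃ γ : ℝ → EuclideanSpace ℝ (Fin n), γ 0 = x ∧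
          ∀ t : ℝ, 0 ≤ t → γ t ∈ U ∧ HasDerivAt γ (X (γ t)) t) ∧
        ∀ γ : ℝ → EuclideanSpace ℝ (Fin n),
          (γ 0 = x ∧ ∀ t : ℝ, 0 ≤ t → γ t ∈ U ∧ HasDerivAt γ (X (γ t)) t) →
          ∀ t : ℝ, 0 < t → ‖γ t - a‖ ≤ θ * Real.exp (-l * t) * ‖x - a‖ :=
  stmt_10_general (hU.mem_nhds haU)
    ((hX.contDiffAt (hU.mem_nhds haU)).hasStrictFDerivAt one_ne_zero) hXa
    (by simpa only [charpoly_map_ofReal_of_single] using heig)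
end

section
/- Let U ⊆ ℝⁿ be open, h : U → ℝⁿ continuous, and f : U → ℝ a C¹ function with |⟨∇f(x), h(x)⟩| ≤ c·|f(x)| for all x ∈ U, for some constant c > 0. Let γ : [0,∞) → U be a differentiable curve with γ′(t) = −h(γ(t)) for all t ≥ 0, and suppose there are constants θ > 0 and λ > 0 with ‖γ(t)‖ ≤ θ·e^{−λ t}·‖γ(0)‖ for all t > 0, with γ(0) ≠ 0 and f(γ(0)) > 0. Then f(γ(t)) ≥ (f(γ(0))/(θ‖γ(0)‖)^{c/λ})·‖γ(t)‖^{c/λ} for all t ≥ 0; consequently f cannot satisfy lim_{x→0} |f(x)|/‖x‖^k = 0 for every k ∈ ℕ, i.e. f is not flat at 0. -/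
open Set Filter
open scoped Topology

/-!
Along the orbit, `g = f ∘ γ` satisfies `g' ≥ -c g` wherever `g > 0`, so `g` never crosses
`g(0) e^{-c't}` from above for `c' > c`, and letting `c' → c` gives `g(t) ≥ g(0) e^{-ct}`. Raising
the decay estimate `‖γ(t)‖ ≤ K e^{-λt}` to the power `c/λ` turns `e^{-ct}` into `(‖γ(t)‖/K)^{c/λ}`.
Since `γ(t) → 0`, this contradicts flatness as long as the orbit avoids `0`; if it reaches `0` in
finite time then `f(0) > 0`, whereas a continuous function that is flat at `0` vanishes there.
-/

theorem mul_exp_neg_le_of_neg_mul_le_deriv_right {g g' : ℝ → ℝ} {a b c : ℝ}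
    (hg : ContinuousOn g (Icc a b))
    (hg' : ∀ t ∈ Ico a b, HasDerivWithinAt g (g' t) (Ici t) t)
    (hbound : ∀ t ∈ Ico a b, 0 < g t → -(c * g t) ≤ g' t) (ha : 0 < g a)
    {t : ℝ} (ht : t ∈ Icc a b) :
    g a * Real.exp (-c * (t - a)) ≤ g t := by
  have hstrict : ∀ c' > c, g a * Real.exp (-c' * (t - a)) ≤ g t := by
    intro c' hc'
    have hbarrier (s : ℝ) : HasDerivAt (fun s => g a * Real.exp (-c' * (s - a)))
        (-c' * (g a * Real.exp (-c' * (s - a)))) s := by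
      have hlinear : HasDerivAt (fun s => -c' * (s - a)) (-c' * 1) s :=
        ((hasDerivAt_id s).sub_const a).const_mul (-c')
      exact (hlinear.exp.const_mul (g a)).congr_deriv (by ring)
    refine image_le_of_deriv_right_lt_deriv_boundary' (by fun_prop)
      (fun s _ => (hbarrier s).hasDerivWithinAt) (by simp) hg hg' ?_ ht
    intro s hs hcontact
    have hgs : 0 < g s := hcontact ▸ mul_pos ha (Real.exp_pos _)
    calc -c' * (g a * Real.exp (-c' * (s - a))) = -c' * g s := by rw [hcontact]
      _ < -c * g s := by gcongr
      _ = -(c * g s) := neg_mul _ _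
      _ ≤ g' s := hbound s hs hgs
  have hcont : Continuous fun c' : ℝ => g a * Real.exp (-c' * (t - a)) := by fun_prop
  exact le_of_tendsto (hcont.continuousWithinAt (s := Ioi c))
    (eventually_mem_nhdsWithin.mono hstrict)

theorem rpow_div_le_rpow_div_mul_exp {r K l c t : ℝ} (hr : 0 ≤ r) (hK : 0 ≤ K) (hl : 0 < l)
    (hc : 0 ≤ c) (hdecay : r ≤ K * Real.exp (-l * t)) :
    r ^ (c / l) ≤ K ^ (c / l) * Real.exp (-c * t) := by
  calc r ^ (c / l) ≤ (K * Real.exp (-l * t)) ^ (c / l) := by gcongr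
    _ = K ^ (c / l) * Real.exp (-l * t * (c / l)) := by
      rw [Real.mul_rpow hK (Real.exp_pos _).le, ← Real.exp_mul]
    _ = K ^ (c / l) * Real.exp (-c * t) := by
      congr 2
      field_simp

section Flat

variable {E F : Type*} [NormedAddCommGroup E] [NormedAddCommGroup F] {f : E → F}

/-- Flatness at the origin: `f(x)` vanishes faster than every power of `‖x‖` as `x → 0`.
The limit is over `x ≠ 0`, so nothing is required of `f 0`. -/
def IsFlatAtZero (f : E → F) : Prop :=
  ∀ k : ℕ, Tendsto (fun x => ‖f x‖ / ‖x‖ ^ k) (𝓝[≠] 0) (𝓝 0)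

theorem IsFlatAtZero.apply_zero_of_continuousAt [(𝓝[≠] (0 : E)).NeBot] (hflat : IsFlatAtZero f)
    (hf : ContinuousAt f 0) : f 0 = 0 := by
  have hlim_zero : Tendsto (fun x => ‖f x‖) (𝓝[≠] 0) (𝓝 0) := by simpa using hflat 0
  have hlim : Tendsto (fun x => ‖f x‖) (𝓝[≠] 0) (𝓝 ‖f 0‖) :=
    hf.norm.tendsto.mono_left nhdsWithin_le_nhds
  exact norm_eq_zero.1 (tendsto_nhds_unique hlim hlim_zero)

theorem IsFlatAtZero.eventually_norm_lt_mul_rpow (hflat : IsFlatAtZero f) {C : ℝ} (hC : 0 < C)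
    (p : ℝ) : ∀ᶠ x in 𝓝[≠] 0, ‖f x‖ < C * ‖x‖ ^ p := by
  obtain ⟨k, hk⟩ := exists_nat_ge p
  have hnorm : ∀ᶠ x in 𝓝[≠] (0 : E), ‖x‖ < 1 :=
    nhdsWithin_le_nhds (continuous_norm.tendsto' 0 0 norm_zero |>.eventually_lt_const one_pos)
  filter_upwards [(hflat k).eventually_lt_const hC, hnorm, self_mem_nhdsWithin] with x hx hx1 hx0
  have hpos : 0 < ‖x‖ := norm_pos_iff.2 hx0
  calc ‖f x‖ < C * ‖x‖ ^ k := (div_lt_iff₀ (pow_pos hpos k)).1 hx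
    _ = C * ‖x‖ ^ (k : ℝ) := by rw [Real.rpow_natCast]
    _ ≤ C * ‖x‖ ^ p := by
      gcongr 1
      exact Real.rpow_le_rpow_of_exponent_ge hpos hx1.le hk

theorem not_isFlatAtZero_of_mul_rpow_le {ι : Type*} {L : Filter ι} [L.NeBot] {x : ι → E}
    (hx : Tendsto x L (𝓝[≠] 0)) {C p : ℝ} (hC : 0 < C)
    (hlower : ∀ᶠ i in L, C * ‖x i‖ ^ p ≤ ‖f (x i)‖) : ¬ IsFlatAtZero f := by
  intro hflat
  obtain ⟨i, hlt, hle⟩ :=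
    ((hx.eventually (hflat.eventually_norm_lt_mul_rpow hC p)).and hlower).exists
  exact hlt.not_ge hle

end Flat

theorem tendsto_zero_of_norm_le_mul_exp {E : Type*} [SeminormedAddCommGroup E] {γ : ℝ → E}
    {K l : ℝ} (hl : 0 < l) (hdecay : ∀ᶠ t in atTop, ‖γ t‖ ≤ K * Real.exp (-l * t)) :
    Tendsto γ atTop (𝓝 0) := by
  have hexp : Tendsto (fun t : ℝ => Real.exp (-l * t)) atTop (𝓝 0) :=
    Real.tendsto_exp_atBot.comp (tendsto_id.const_mul_atTop_of_neg (neg_neg_of_pos hl))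
  exact squeeze_zero_norm' hdecay (by simpa using hexp.const_mul K)

section Orbit

variable {E : Type*} [NormedAddCommGroup E] [NormedSpace ℝ E] {U : Set E} {h : E → E} {f : E → ℝ}
  {c K l : ℝ} {γ : ℝ → E}

theorem mul_exp_neg_le_comp_of_backward_orbit (hf : ∀ x ∈ U, DifferentiableAt ℝ f x)
    (hineq : ∀ x ∈ U, 0 < f x → fderiv ℝ f x (h x) ≤ c * f x)
    (hγU : ∀ t, 0 ≤ t → γ t ∈ U) (hγ : IsIntegralCurveOn γ (fun _ x => -h x) (Ici 0))
    (hfγ0 : 0 < f (γ 0)) {t : ℝ} (ht : 0 ≤ t) :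
    f (γ 0) * Real.exp (-c * t) ≤ f (γ t) := by
  have hderiv : ∀ s, 0 ≤ s →
      HasDerivWithinAt (f ∘ γ) (-fderiv ℝ f (γ s) (h (γ s))) (Ici 0) s := fun s hs => by
    simpa only [map_neg] using (hf _ (hγU s hs)).hasFDerivAt.comp_hasDerivWithinAt s (hγ s hs)
  have hcont : ContinuousOn (f ∘ γ) (Icc 0 t) := fun s hs =>
    (hderiv s hs.1).continuousWithinAt.mono Icc_subset_Ici_self
  simpa only [sub_zero, Function.comp_apply] using
    mul_exp_neg_le_of_neg_mul_le_deriv_right (c := c) hcont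
      (fun s hs => (hderiv s hs.1).mono (Ici_subset_Ici.2 hs.1))
      (fun s hs hpos => neg_le_neg (hineq _ (hγU s hs.1) hpos)) hfγ0 (right_mem_Icc.2 ht)

theorem div_rpow_mul_norm_rpow_le_comp_of_backward_orbit (hf : ∀ x ∈ U, DifferentiableAt ℝ f x)
    (hc : 0 ≤ c) (hineq : ∀ x ∈ U, 0 < f x → fderiv ℝ f x (h x) ≤ c * f x)
    (hγU : ∀ t, 0 ≤ t → γ t ∈ U) (hγ : IsIntegralCurveOn γ (fun _ x => -h x) (Ici 0))
    (hfγ0 : 0 < f (γ 0)) (hK : 0 < K) (hl : 0 < l) {t : ℝ} (ht : 0 ≤ t)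
    (hdecay : ‖γ t‖ ≤ K * Real.exp (-l * t)) :
    f (γ 0) / K ^ (c / l) * ‖γ t‖ ^ (c / l) ≤ f (γ t) :=
  calc f (γ 0) / K ^ (c / l) * ‖γ t‖ ^ (c / l)
      ≤ f (γ 0) / K ^ (c / l) * (K ^ (c / l) * Real.exp (-c * t)) := by
        gcongr
        exact rpow_div_le_rpow_div_mul_exp (norm_nonneg _) hK.le hl hc hdecay
    _ = f (γ 0) * Real.exp (-c * t) := by field_simp
    _ ≤ f (γ t) := mul_exp_neg_le_comp_of_backward_orbit hf hineq hγU hγ hfγ0 ht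

theorem stmt_11_general (hU : IsOpen U) (hf : DifferentiableOn ℝ f U) (hc : 0 ≤ c)
    (hineq : ∀ x ∈ U, 0 < f x → fderiv ℝ f x (h x) ≤ c * f x)
    (hγU : ∀ t, 0 ≤ t → γ t ∈ U) (hγ : IsIntegralCurveOn γ (fun _ x => -h x) (Ici 0))
    (hl : 0 < l) (hdecay : ∀ t, 0 < t → ‖γ t‖ ≤ K * Real.exp (-l * t))
    (hγ0 : γ 0 ≠ 0) (hfγ0 : 0 < f (γ 0)) :
    (∀ t, 0 ≤ t → f (γ 0) / K ^ (c / l) * ‖γ t‖ ^ (c / l) ≤ f (γ t)) ∧ ¬ IsFlatAtZero f := by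
  have hfU : ∀ x ∈ U, DifferentiableAt ℝ f x := fun x hx => hf.differentiableAt (hU.mem_nhds hx)
  have hdecay_Ici : ∀ t ∈ Ici 0, ‖γ t‖ ≤ K * Real.exp (-l * t) := by
    rw [← closure_Ioi]
    exact le_on_closure hdecay (by simpa only [closure_Ioi] using hγ.continuousOn.norm)
      (by fun_prop)
  have hK : 0 < K := (norm_pos_iff.2 hγ0).trans_le (by simpa using hdecay_Ici 0 self_mem_Ici)
  have hlower : ∀ t, 0 ≤ t → f (γ 0) / K ^ (c / l) * ‖γ t‖ ^ (c / l) ≤ f (γ t) := fun t ht =>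
    div_rpow_mul_norm_rpow_le_comp_of_backward_orbit hfU hc hineq hγU hγ hfγ0 hK hl ht
      (hdecay_Ici t ht)
  refine ⟨hlower, ?_⟩
  by_cases hreach : ∃ t, 0 ≤ t ∧ γ t = 0
  · obtain ⟨t, ht, hγt⟩ := hreach
    have : Nontrivial E := ⟨γ 0, 0, hγ0⟩
    have : (𝓝[≠] (0 : E)).NeBot := Module.punctured_nhds_neBot ℝ E 0
    have hf0 : 0 < f 0 := hγt ▸ (mul_pos hfγ0 (Real.exp_pos _)).trans_le
      (mul_exp_neg_le_comp_of_backward_orbit hfU hineq hγU hγ hfγ0 ht)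
    exact fun hflat => hf0.ne'
      (hflat.apply_zero_of_continuousAt (hfU 0 (hγt ▸ hγU t ht)).continuousAt)
  · push Not at hreach
    have hγlim : Tendsto γ atTop (𝓝[≠] 0) := tendsto_nhdsWithin_iff.2
      ⟨tendsto_zero_of_norm_le_mul_exp hl ((eventually_gt_atTop 0).mono hdecay),
        (eventually_ge_atTop 0).mono hreach⟩
    exact not_isFlatAtZero_of_mul_rpow_le hγlim (div_pos hfγ0 (Real.rpow_pos_of_pos hK _))
      ((eventually_ge_atTop 0).mono fun t ht => (hlower t ht).trans (le_abs_self _))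

end Orbit

/-- Power-law lower bound along an orbit decaying to the origin: if
`|⟨∇f(x), h(x)⟩| ≤ c·|f(x)|` on `U`, `γ : [0,∞) → U` solves `γ′ = -h(γ)` with
`‖γ(t)‖ ≤ θ·e^{-λt}·‖γ(0)‖` for `t > 0`, `γ(0) ≠ 0` and `f(γ(0)) > 0`, then
`f(γ(t)) ≥ (f(γ(0))/(θ‖γ(0)‖)^{c/λ})·‖γ(t)‖^{c/λ}` for all `t ≥ 0`; consequently
`f` is not flat at `0`. -/
theorem stmt_11 (n : ℕ) (U : Set (EuclideanSpace ℝ (Fin n))) (hU : IsOpen U)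
    (h : EuclideanSpace ℝ (Fin n) → EuclideanSpace ℝ (Fin n))
    (hh : ContinuousOn h U)
    (f : EuclideanSpace ℝ (Fin n) → ℝ) (hf : ContDiffOn ℝ 1 f U)
    (c : ℝ) (hc : 0 < c)
    (hineq : ∀ x ∈ U, |fderiv ℝ f x (h x)| ≤ c * |f x|)
    (γ : ℝ → EuclideanSpace ℝ (Fin n))
    (hγU : ∀ t : ℝ, 0 ≤ t → γ t ∈ U)
    (hγ' : ∀ t : ℝ, 0 ≤ t → HasDerivAt γ (-h (γ t)) t)
    (θ l : ℝ) (hθ : 0 < θ) (hl : 0 < l)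
    (hdecay : ∀ t : ℝ, 0 < t → ‖γ t‖ ≤ θ * Real.exp (-l * t) * ‖γ 0‖)
    (hγ0 : γ 0 ≠ 0) (hfγ0 : 0 < f (γ 0)) :
    (∀ t : ℝ, 0 ≤ t →
        (f (γ 0) / (θ * ‖γ 0‖) ^ (c / l)) * ‖γ t‖ ^ (c / l) ≤ f (γ t)) ∧
      ¬ (∀ k : ℕ, Tendsto (fun x => |f x| / ‖x‖ ^ k)
          (𝓝[≠] (0 : EuclideanSpace ℝ (Fin n))) (𝓝 0)) :=
  stmt_11_general hU (hf.differentiableOn one_ne_zero) hc.le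
    (fun x hx hpos => (le_abs_self _).trans (abs_of_pos hpos ▸ hineq x hx))
    hγU (fun t ht => (hγ' t ht).hasDerivWithinAt) hl
    (fun t ht => (hdecay t ht).trans_eq (mul_right_comm _ _ _)) hγ0 hfγ0
end
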